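/- arXiv:2101.12621 — 4 statements merged into one kernel-verified Lean document; each statement's English description precedes it below -/
import Mathlib

section
/- Let P be a finite pure weighted graded poset of rank d, let −1 ≤ k < l ≤ d, and let f, g ∈ C^l. Then ⟨f,g⟩ = Σ_{x∈P(k)} m(x)·⟨f_x, g_x⟩_x, where f_x, g_x are the localizations of f, g to the link P_x and ⟨·,·⟩_x is the inner product of the link. -/
open Finset

attribute [local instance] Classical.propDecidable

noncomputable section

/-- A finite pure weighted graded poset of rank `d`, presented as a rank function
and a weight scheme on a finite partial order `P`. -/
structure WGP (P : Type) [Fintype P] [PartialOrder P] where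
  /-- the rank of the poset -/
  d : ℤ
  /-- the rank function -/
  rk : P → ℤ
  rk_mono : Monotone rk
  rk_lb : ∀ x, -1 ≤ rk x
  rk_ub : ∀ x, rk x ≤ d
  rk_covBy : ∀ a b : P, a ⋖ b → rk b = rk a + 1
  bot_unique : ∃! x : P, rk x = -1
  isPure : ∀ x : P, ∃ y : P, rk y = d ∧ x ≤ y
  /-- the weight function -/
  m : P → ℝ
  m_pos : ∀ x, 0 < m x
  /-- the transition probabilities: `p y x` is `p_{y → x}` -/
  p : P → P → ℝ
  p_nonneg : ∀ y x, 0 ≤ p y x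
  p_pos_iff : ∀ y x, 0 < p y x ↔ x ⋖ y
  p_sum : ∀ y, 0 ≤ rk y → ∑ x ∈ univ.filter (fun x => x ⋖ y), p y x = 1
  m_eq : ∀ x, rk x < d → m x = ∑ y ∈ univ.filter (fun y => x ⋖ y), p y x * m y
  m_bot : ∀ x, rk x = -1 → m x = 1

/-- `T` has at most `n` eigenvalues greater than `c`, counted with
(geometric) multiplicity. -/
def eigMultAboveLe {V : Type*} [AddCommGroup V] [Module ℝ V]
    (T : Module.End ℝ V) (c : ℝ) (n : ℕ) : Prop :=
  ∀ s : Finset ℝ, (∀ μ ∈ s, c < μ) →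
    ∑ μ ∈ s, Module.finrank ℝ (T.eigenspace μ) ≤ n

/-- `μ` is the second largest eigenvalue of `T`, counted with multiplicity. -/
def IsSecondLargestEig {V : Type*} [AddCommGroup V] [Module ℝ V]
    (T : Module.End ℝ V) (μ : ℝ) : Prop :=
  T.HasEigenvalue μ ∧ eigMultAboveLe T μ 1 ∧
    ∃ s : Finset ℝ, (∀ ν ∈ s, μ ≤ ν) ∧
      2 ≤ ∑ ν ∈ s, Module.finrank ℝ (T.eigenspace ν)

/-- `ν` is the least eigenvalue of `T`. -/
def IsLeastEig {V : Type*} [AddCommGroup V] [Module ℝ V]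
    (T : Module.End ℝ V) (ν : ℝ) : Prop :=
  T.HasEigenvalue ν ∧ ∀ c : ℝ, T.HasEigenvalue c → ν ≤ c

/-- `λ(T) ≤ lam`, i.e. the second largest eigenvalue of `T` (with multiplicity)
is at most `lam` and the least eigenvalue is at least `-lam`. -/
def lamBd {V : Type*} [AddCommGroup V] [Module ℝ V]
    (T : Module.End ℝ V) (lam : ℝ) : Prop :=
  eigMultAboveLe T lam 1 ∧ ∀ c : ℝ, T.HasEigenvalue c → -lam ≤ c

namespace WGP

variable {P : Type} [Fintype P] [PartialOrder P] (W : WGP P)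

/-- The level set `P(i)`. -/
def lvl (i : ℤ) : Finset P := univ.filter (fun x => W.rk x = i)

/-- The weighted inner product on `C^i`. -/
def innerAt (i : ℤ) (f g : P → ℝ) : ℝ := ∑ x ∈ W.lvl i, W.m x * f x * g x

/-- The squared norm on `C^i`. -/
def normSqAt (i : ℤ) (f : P → ℝ) : ℝ := W.innerAt i f f

/-- The norm on `C^i`. -/
def normAt (i : ℤ) (f : P → ℝ) : ℝ := Real.sqrt (W.normSqAt i f)

/-- The matrix of transition probabilities : entry `(y, x)` is `p_{y→x}`,
which vanishes unless `x ⋖ y`.  This is also the matrix of the up operator. -/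
def upMat : Matrix P P ℝ := Matrix.of fun y x => W.p y x

/-- The matrix of the down operator. -/
def downMat : Matrix P P ℝ := Matrix.of fun x y => W.p y x * W.m y / W.m x

/-- The up operator `U`. -/
def Up (f : P → ℝ) : P → ℝ := W.upMat.mulVec f

/-- The down operator `D`. -/
def Down (f : P → ℝ) : P → ℝ := W.downMat.mulVec f

/-- `chSum x y = Σ_{c ∈ Ch(y→x)} p(c)`, the total `p`-weight of maximal chains
from `x` up to `y` (the entry of the corresponding power of the transition
matrix). -/
def chSum (x y : P) : ℝ := (W.upMat ^ (W.rk y - W.rk x).toNat) y x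

/-- The induced weight function of the link `P_x`. -/
def mL (x y : P) : ℝ := W.m y / W.m x * W.chSum x y

/-- The induced transition probabilities of the link `P_x` :
`pL x z y = (p_x)_{z → y}`. -/
def pL (x z y : P) : ℝ := W.p z y * W.chSum x y / W.chSum x z

/-- The level set `P_x(j)` of the link of `x`. -/
def linkLvl (x : P) (j : ℤ) : Finset P :=
  univ.filter (fun y => x ≤ y ∧ W.rk y = W.rk x + 1 + j)

/-- The inner product of the link `P_x` at link-level `j`. -/
def innerL (x : P) (j : ℤ) (f g : P → ℝ) : ℝ :=
  ∑ y ∈ W.linkLvl x j, W.mL x y * f y * g y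

/-- The matrix of the up operator of the link `P_x`. -/
def upMatL (x : P) : Matrix P P ℝ :=
  Matrix.of fun z y => if y ⋖ z ∧ x ≤ y then W.pL x z y else 0

/-- The matrix of the down operator of the link `P_x`. -/
def downMatL (x : P) : Matrix P P ℝ :=
  Matrix.of fun y z => if y ⋖ z then W.pL x z y * W.mL x z / W.mL x y else 0

/-- The up operator of the link `P_x`. -/
def UpL (x : P) (f : P → ℝ) : P → ℝ := (W.upMatL x).mulVec f

/-- The down operator of the link `P_x`. -/
def DownL (x : P) (f : P → ℝ) : P → ℝ := (W.downMatL x).mulVec f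

/-- The up-down walk `M^+_{x,0}` of the link `P_x`. -/
def MplusL (x : P) (f : P → ℝ) : P → ℝ := W.DownL x (W.UpL x f)

/-- The down-up walk `M^-_{x,0}` of the link `P_x`. -/
def MminusL (x : P) (f : P → ℝ) : P → ℝ := W.UpL x (W.DownL x f)

/-- The adjacency matrix. -/
def adjMat : Matrix P P ℝ := Matrix.of fun y x =>
  if x = y then 0 else
    ∑ z ∈ univ.filter (fun z => x ⋖ z ∧ y ⋖ z),
      W.m z * W.p z x * W.p z y / ((1 - W.p z y) * W.m y)

/-- The adjacency operator. -/
def Adj (f : P → ℝ) : P → ℝ := W.adjMat.mulVec f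

/-- The adjacency matrix of the link `P_x`. -/
def adjMatL (x : P) : Matrix P P ℝ := Matrix.of fun y w =>
  if w = y then 0 else
    ∑ z ∈ univ.filter (fun z => w ⋖ z ∧ y ⋖ z),
      W.mL x z * W.pL x z w * W.pL x z y / ((1 - W.pL x z y) * W.mL x y)

/-- The adjacency operator of the link `P_x`. -/
def AdjL (x : P) (f : P → ℝ) : P → ℝ := (W.adjMatL x).mulVec f

/-- The up-down walk `M^+_l` as an endomorphism of `C^l`. -/
def MplusEnd (l : ℤ) : Module.End ℝ ({x : P // W.rk x = l} → ℝ) :=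
  ((W.downMat * W.upMat).submatrix Subtype.val Subtype.val).mulVecLin

/-- The up-down walk `M^+_{x,0}` as an endomorphism of `C^0(P_x)`. -/
def MplusEndL (x : P) : Module.End ℝ ({y : P // x ⋖ y} → ℝ) :=
  ((W.downMatL x * W.upMatL x).submatrix Subtype.val Subtype.val).mulVecLin

/-- The adjacency operator `A_x` of the link `P_x` as an endomorphism of
`C^0(P_x)`. -/
def AdjEndL (x : P) : Module.End ℝ ({y : P // x ⋖ y} → ℝ) :=
  ((W.adjMatL x).submatrix Subtype.val Subtype.val).mulVecLin

/-- A standard weight scheme. -/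
def Standard : Prop :=
  ∀ y x : P, x ⋖ y → W.p y x = 1 / ((univ.filter (fun z => z ⋖ y)).card : ℝ)

/-- `P` is lower regular at level `i` with constant `N`. -/
def LowerRegAt (i : ℤ) (N : ℕ) : Prop :=
  ∀ y : P, W.rk y = i → (univ.filter (fun z => z ⋖ y)).card = N

/-- `P` is middle regular at level `i` with constant `N`. -/
def MiddleRegAt (i : ℤ) (N : ℕ) : Prop :=
  ∀ x z : P, W.rk x = i + 1 → W.rk z = i - 1 → z < x →
    (univ.filter (fun y => z ⋖ y ∧ y ⋖ x)).card = N

/-- `P` is `∨∧`-regular at level `i` with constant `N`. -/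
def WedgeRegAt (i : ℤ) (N : ℕ) : Prop :=
  ∀ y₁ y₂ : P, W.rk y₁ = i → W.rk y₂ = i → y₁ ≠ y₂ → (∃ z, y₁ ⋖ z ∧ y₂ ⋖ z) →
    (univ.filter (fun s => s ⋖ y₁ ∧ s ⋖ y₂)).card = N

/-- `P` is `⅄`-regular with constant `R`. -/
def WyeReg (R : ℕ) : Prop :=
  ∀ u y₁ y₂ : P, W.rk u = 2 → W.rk y₁ = 0 → W.rk y₂ = 0 → y₁ ≠ y₂ →
    y₁ < u → y₂ < u →
    (univ.filter (fun z => y₁ ⋖ z ∧ y₂ ⋖ z ∧ z ⋖ u)).card = R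

/-- Property UL.1 with constants `c`. -/
def UL1 (c : ℤ → ℝ) : Prop :=
  ∀ l : ℤ, 0 ≤ l → l < W.d → ∀ y : P, W.rk y = l → ∀ x : P, y ⋖ x →
    ∑ z ∈ univ.filter (fun z => z ⋖ y), W.p y z ^ 2 / W.chSum z x = c l

/-- Property UL.2 with constants `c`. -/
def UL2 (c : ℤ → ℝ) : Prop :=
  ∀ l : ℤ, 0 ≤ l → l < W.d → ∀ y₁ y₂ : P, W.rk y₁ = l → W.rk y₂ = l → y₁ ≠ y₂ →
    ∀ x : P, y₁ ⋖ x → y₂ ⋖ x →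
    ∑ z ∈ univ.filter (fun z => z ⋖ y₁ ∧ z ⋖ y₂),
      W.p y₁ z * W.p y₂ z / W.chSum z x = c l

/-- Property UL.3 with constants `c`. -/
def UL3 (c : ℤ → ℝ) : Prop :=
  ∀ l : ℤ, 0 ≤ l → l < W.d → ∀ y : P, W.rk y = l →
    ∑ x ∈ univ.filter (fun x => y ⋖ x), W.m x * W.p x y ^ 2 = c l * W.m y

/-- Property AL. -/
def AL : Prop :=
  ∀ l : ℤ, 0 ≤ l → l ≤ W.d - 1 → ∀ x y : P, W.rk x = l → W.rk y = l → x ≠ y →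
    ∑ z ∈ univ.filter (fun z => x ⋖ z ∧ y ⋖ z),
        W.m z * W.p z x * W.p z y / (1 - W.p z x)
    = ∑ z ∈ univ.filter (fun z => x ⋖ z ∧ y ⋖ z),
        W.m z * W.p z x * W.p z y *
          ∑ s ∈ univ.filter (fun s => s ⋖ x ∧ s ⋖ y),
            W.p x s * W.p y s / (W.chSum s z - W.p z x * W.p x s)

/-- Equation TL.1 with constant `c`. -/
def TL1 (c : ℝ) : Prop :=
  ∀ y : P, W.rk y = 0 →
    c * W.m y = ∑ z ∈ univ.filter (fun z => y ⋖ z), W.m z * W.p z y ^ 2 *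
      ∑ x ∈ univ.filter (fun x => x ⋖ z ∧ x ≠ y), W.p z x / (1 - W.p z x) ^ 2

/-- Equation TL.2 with constant `c`. -/
def TL2 (c : ℝ) : Prop :=
  ∀ y₁ y₂ : P, W.rk y₁ = 0 → W.rk y₂ = 0 → y₁ ≠ y₂ →
    c * ∑ z ∈ univ.filter (fun z => y₁ ⋖ z ∧ y₂ ⋖ z),
          W.m z * W.p z y₁ * W.p z y₂ / (1 - W.p z y₁)
    = ∑ z ∈ univ.filter (fun z => y₁ ⋖ z ∧ y₂ ⋖ z),
        W.m z * W.p z y₁ * W.p z y₂ *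
          ∑ x ∈ univ.filter (fun x => x ⋖ z ∧ x ≠ y₁ ∧ x ≠ y₂),
            W.p z x / (1 - W.p z x) ^ 2

/-- Equation TL.3 with constant `c`. -/
def TL3 (c : ℝ) : Prop :=
  ∀ y : P, W.rk y = 0 →
    c * W.m y =
      ∑ x ∈ univ.filter (fun x => W.rk x = 0 ∧ x ≠ y),
        ∑ z ∈ univ.filter (fun z => x ⋖ z ∧ y ⋖ z),
          ∑ w ∈ univ.filter (fun w => w ≠ z ∧ x ⋖ w ∧ y ⋖ w),
            ∑ u ∈ univ.filter (fun u => z ⋖ u ∧ w ⋖ u),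
              W.m u * W.p u z * W.p u w * W.p w y * W.p z y * W.p w x * W.p z x /
                (W.chSum x u * (1 - W.p u z * W.p z x / W.chSum x u) *
                  (1 - W.p w x) * (1 - W.p z x))

/-- Equation TL.4 with constant `c`. -/
def TL4 (c : ℝ) : Prop :=
  ∀ y₁ y₂ : P, W.rk y₁ = 0 → W.rk y₂ = 0 → y₁ ≠ y₂ →
    c * ∑ z ∈ univ.filter (fun z => y₁ ⋖ z ∧ y₂ ⋖ z),
          W.m z * W.p z y₁ * W.p z y₂ / (1 - W.p z y₁)
    = ∑ x ∈ univ.filter (fun x => W.rk x = 0 ∧ x ≠ y₁ ∧ x ≠ y₂),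
        ∑ z ∈ univ.filter (fun z => x ⋖ z ∧ y₂ ⋖ z),
          ∑ w ∈ univ.filter (fun w => w ≠ z ∧ x ⋖ w ∧ y₁ ⋖ w),
            ∑ u ∈ univ.filter (fun u => z ⋖ u ∧ w ⋖ u),
              W.m u * W.p u z * W.p u w * W.p w y₁ * W.p z y₂ * W.p w x * W.p z x /
                (W.chSum x u * (1 - W.p u z * W.p z x / W.chSum x u) *
                  (1 - W.p w x) * (1 - W.p z x))

/-- The induced function `f̂_x ∈ C^0(P_x)` of `f ∈ C^0`. -/
def hatF (x : P) (f : P → ℝ) : P → ℝ := fun z =>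
  (1 / (1 - W.p z x)) * ∑ y ∈ univ.filter (fun y => y ≠ x ∧ y ⋖ z), W.p z y * f y

/-- `P` is connected: the Markov chain `M^+_0` on `P(0)` is irreducible. -/
def Connected : Prop :=
  ∀ y z : P, W.rk y = 0 → W.rk z = 0 →
    ∃ j : ℕ, 0 < j ∧ ((W.downMat * W.upMat) ^ j) z y ≠ 0

/-- The link `P_x` is connected: the Markov chain `M^+_{x,0}` on `P_x(0)` is
irreducible. -/
def LinkConnected (x : P) : Prop :=
  ∀ y z : P, x ⋖ y → x ⋖ z →
    ∃ j : ℕ, 0 < j ∧ ((W.downMatL x * W.upMatL x) ^ j) z y ≠ 0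

/-- `c` is a nontrivial eigenvalue of the adjacency operator `A` of `P`,
i.e. one with an eigenvector orthogonal to the constants. -/
def IsNontrivEigAdj (c : ℝ) : Prop :=
  ∃ f : P → ℝ, (∃ y, W.rk y = 0 ∧ f y ≠ 0) ∧
    (∀ y, W.rk y = 0 → W.Adj f y = c * f y) ∧
    W.innerAt 0 f (fun _ => 1) = 0

/-- `c` is a nontrivial eigenvalue of the adjacency operator `A_x` of the
link `P_x`. -/
def IsNontrivEigAdjL (x : P) (c : ℝ) : Prop :=
  ∃ f : P → ℝ, (∃ y, x ⋖ y ∧ f y ≠ 0) ∧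
    (∀ y, x ⋖ y → W.AdjL x f y = c * f y) ∧
    W.innerL x 0 f (fun _ => 1) = 0

end WGP


theorem WGP.p_ne {P : Type} [Fintype P] [PartialOrder P] (W : WGP P) {y x : P}
    (h : W.p y x ≠ 0) : x ⋖ y :=
  (W.p_pos_iff y x).1 (lt_of_le_of_ne (W.p_nonneg y x) (Ne.symm h))

theorem WGP.p_sum' {P : Type} [Fintype P] [PartialOrder P] (W : WGP P) (y : P)
    (hy : 0 ≤ W.rk y) : ∑ x, W.p y x = 1 := by
  rw [← W.p_sum y hy]
  symm
  apply Finset.sum_subset (Finset.subset_univ _)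
  intro x _ hx
  by_contra h
  exact hx (by simpa using W.p_ne h)

theorem WGP.pow_ne {P : Type} [Fintype P] [PartialOrder P] (W : WGP P) (n : ℕ) :
    ∀ y x : P, (W.upMat ^ n) y x ≠ 0 → x ≤ y ∧ W.rk y = W.rk x + n := by
  induction n with
  | zero =>
    intro y x h
    rw [pow_zero] at h
    have : y = x := by
      by_contra hne
      exact h (Matrix.one_apply_ne hne)
    subst this
    simp
  | succ n ih =>
    intro y x h
    rw [pow_succ', Matrix.mul_apply] at h
    obtain ⟨z, _, hz⟩ := Finset.exists_ne_zero_of_sum_ne_zero h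
    have h1 : z ⋖ y := W.p_ne (left_ne_zero_of_mul hz)
    have h2 := ih z x (right_ne_zero_of_mul hz)
    refine ⟨h2.1.trans h1.le, ?_⟩
    rw [W.rk_covBy z y h1, h2.2]
    push_cast
    ring

theorem WGP.pow_sum {P : Type} [Fintype P] [PartialOrder P] (W : WGP P) (n : ℕ) :
    ∀ y : P, (n : ℤ) ≤ W.rk y + 1 → ∑ x, (W.upMat ^ n) y x = 1 := by
  induction n with
  | zero =>
    intro y _
    simp [Matrix.one_apply]
  | succ n ih =>
    intro y hy
    push_cast at hy
    simp only [pow_succ', Matrix.mul_apply]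
    rw [Finset.sum_comm, ← W.p_sum' y (by omega)]
    apply Finset.sum_congr rfl
    intro z _
    rw [← Finset.mul_sum]
    by_cases h : W.p y z = 0
    · simp [WGP.upMat, h]
    · have := W.rk_covBy z y (W.p_ne h)
      rw [ih z (by omega), mul_one]
      rfl

/-- the basic localization property for inner products. -/
theorem stmt0 {P : Type} [Fintype P] [PartialOrder P] (W : WGP P)
    (k l : ℤ) (hk : -1 ≤ k) (hkl : k < l) (hl : l ≤ W.d) (f g : P → ℝ) :
    W.innerAt l f g = ∑ x ∈ W.lvl k, W.m x * W.innerL x (l - k - 1) f g := by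
  have key : ∀ x ∈ W.lvl k, W.m x * W.innerL x (l - k - 1) f g =
      ∑ y ∈ W.lvl l, (W.m y * f y * g y) * (W.upMat ^ (l - k).toNat) y x := by
    intro x hx
    have hx' : W.rk x = k := by simpa [WGP.lvl] using hx
    have hs : W.linkLvl x (l - k - 1) ⊆ W.lvl l := by
      intro y hy
      simp only [WGP.linkLvl, WGP.lvl, Finset.mem_filter, Finset.mem_univ, true_and] at hy ⊢
      omega
    rw [WGP.innerL, Finset.mul_sum, ← Finset.sum_subset hs]
    · apply Finset.sum_congr rfl
      intro y hy
      have hy' : W.rk y = l := by simpa [WGP.lvl] using hs hy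
      have := (W.m_pos x).ne'
      simp only [WGP.mL, WGP.chSum, hx', hy']
      field_simp
    · intro y hy hn
      have hy' : W.rk y = l := by simpa [WGP.lvl] using hy
      by_contra h
      apply hn
      have := (W.pow_ne _ y x (right_ne_zero_of_mul h)).1
      simp only [WGP.linkLvl, Finset.mem_filter, Finset.mem_univ, true_and]
      exact ⟨this, by omega⟩
  rw [Finset.sum_congr rfl key, Finset.sum_comm, WGP.innerAt]
  apply Finset.sum_congr rfl
  intro y hy
  have hy' : W.rk y = l := by simpa [WGP.lvl] using hy
  rw [← Finset.mul_sum]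
  have : ∑ x ∈ W.lvl k, (W.upMat ^ (l - k).toNat) y x = 1 := by
    rw [← W.pow_sum (l - k).toNat y (by omega)]
    apply Finset.sum_subset (Finset.subset_univ _)
    intro x _ hx
    by_contra h
    have := (W.pow_ne _ y x h).2
    apply hx
    simp only [WGP.lvl, Finset.mem_filter, Finset.mem_univ, true_and]
    omega
  rw [this, mul_one]
end
end

section
/- Let P be a finite pure weighted graded poset of rank d, let −1 ≤ k < l ≤ d, and let f, g ∈ C^l. Then ⟨D_l f, D_l g⟩ = Σ_{x∈P(k)} m(x)·⟨D_{x,l−k−1} f_x, D_{x,l−k−1} g_x⟩_x, where f_x, g_x are the localizations to the link P_x and D_{x,i} is the down operator of the link P_x. -/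
open Finset

attribute [local instance] Classical.propDecidable

noncomputable section

namespace WGP

variable {P : Type} [Fintype P] [PartialOrder P] (W : WGP P)

theorem aux_p_zero (y x : P) (h : ¬ x ⋖ y) : W.p y x = 0 := by
  have h1 := W.p_nonneg y x
  have h2 := (W.p_pos_iff y x).not.mpr h
  linarith

theorem aux_pow_nonneg (n : ℕ) (y x : P) : 0 ≤ (W.upMat ^ n) y x := by
  induction n generalizing x with
  | zero => rw [pow_zero, Matrix.one_apply]; split_ifs <;> norm_num
  | succ n ih =>
    rw [pow_succ, Matrix.mul_apply]
    exact Finset.sum_nonneg fun w _ => mul_nonneg (ih w) (W.p_nonneg w x)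

theorem aux_pow_supp (n : ℕ) (y x : P) (h : (W.upMat ^ n) y x ≠ 0) :
    x ≤ y ∧ W.rk y = W.rk x + n := by
  induction n generalizing x with
  | zero =>
    rw [pow_zero, Matrix.one_apply] at h
    have : y = x := by by_contra hc; simp [hc] at h
    subst this; simp
  | succ n ih =>
    rw [pow_succ, Matrix.mul_apply] at h
    obtain ⟨w, _, hw⟩ := Finset.exists_ne_zero_of_sum_ne_zero h
    obtain ⟨h1, h2⟩ := ih w (left_ne_zero_of_mul hw)
    have h3 : W.p w x ≠ 0 := right_ne_zero_of_mul hw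
    have h4 : x ⋖ w := by by_contra hc; exact h3 (W.aux_p_zero w x hc)
    have h5 := W.rk_covBy _ _ h4
    refine ⟨h4.le.trans h1, ?_⟩
    push_cast; omega

theorem aux_p_sum (y : P) (hy : 0 ≤ W.rk y) : ∑ x, W.p y x = 1 := by
  rw [← W.p_sum y hy]
  symm
  apply Finset.sum_subset (Finset.subset_univ _)
  intro x _ hx
  exact W.aux_p_zero y x (by simpa using hx)

theorem aux_pow_sum (n : ℕ) (y : P) (h : -1 ≤ W.rk y - n) :
    ∑ x, (W.upMat ^ n) y x = 1 := by
  induction n with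
  | zero => simp [Matrix.one_apply]
  | succ n ih =>
    push_cast at h
    rw [← ih (by omega)]
    simp_rw [pow_succ, Matrix.mul_apply]
    rw [Finset.sum_comm]
    refine Finset.sum_congr rfl fun w _ => ?_
    rw [← Finset.mul_sum]
    by_cases hw : (W.upMat ^ n) y w = 0
    · rw [hw, zero_mul]
    · have h2 := (W.aux_pow_supp n y w hw).2
      have := W.aux_p_sum w (by omega)
      simp only [upMat, Matrix.of_apply] at *
      rw [this, mul_one]

theorem aux_chSum_sum (k : ℤ) (hk : -1 ≤ k) (y : P) (hy : k ≤ W.rk y) :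
    ∑ x ∈ W.lvl k, W.chSum x y = 1 := by
  rw [← W.aux_pow_sum (W.rk y - k).toNat y (by omega)]
  rw [← Finset.sum_subset (Finset.subset_univ (W.lvl k))]
  · refine Finset.sum_congr rfl fun x hx => ?_
    simp only [lvl, Finset.mem_filter] at hx
    rw [chSum, hx.2]
  · intro x _ hx
    by_contra hc
    have := (W.aux_pow_supp _ _ _ hc).2
    apply hx
    simp only [lvl, Finset.mem_filter, Finset.mem_univ, true_and]
    omega

theorem aux_chSum_succ (x y z : P) (hxy : x ≤ y) (hyz : y ⋖ z) (h : W.chSum x y ≠ 0) :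
    W.chSum x z ≠ 0 := by
  have h1 := W.rk_covBy _ _ hyz
  have h2 := W.rk_mono hxy
  have h3 : (W.rk z - W.rk x).toNat = (W.rk y - W.rk x).toNat + 1 := by omega
  have hpos : 0 < W.chSum x y := lt_of_le_of_ne (W.aux_pow_nonneg _ _ _) h.symm
  apply ne_of_gt
  rw [chSum, h3, pow_succ', Matrix.mul_apply]
  refine lt_of_lt_of_le (mul_pos ((W.p_pos_iff z y).2 hyz) hpos) ?_
  exact Finset.single_le_sum
    (f := fun w => W.upMat z w * (W.upMat ^ (W.rk y - W.rk x).toNat) w x)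
    (fun w _ => mul_nonneg (W.p_nonneg z w) (W.aux_pow_nonneg _ _ _)) (Finset.mem_univ y)

theorem aux_DownL (x y : P) (hxy : x ≤ y) (h : W.chSum x y ≠ 0) (f : P → ℝ) :
    W.DownL x f y = W.Down f y := by
  simp only [DownL, Down, Matrix.mulVec, dotProduct, downMatL, downMat, Matrix.of_apply]
  refine Finset.sum_congr rfl fun z _ => ?_
  congr 1
  split_ifs with hz
  · have h1 := W.aux_chSum_succ x y z hxy hz h
    have h2 := (W.m_pos x).ne'
    have h3 := (W.m_pos y).ne'
    simp only [pL, mL]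
    field_simp
  · rw [W.aux_p_zero z y hz]; simp

end WGP

/-- the basic localization property for the down operators. -/
theorem stmt1 {P : Type} [Fintype P] [PartialOrder P] (W : WGP P)
    (k l : ℤ) (hk : -1 ≤ k) (hkl : k < l) (hl : l ≤ W.d) (f g : P → ℝ) :
    W.innerAt (l - 1) (W.Down f) (W.Down g)
      = ∑ x ∈ W.lvl k, W.m x * W.innerL x (l - k - 2) (W.DownL x f) (W.DownL x g) := by
  have key : ∀ x ∈ W.lvl k, W.m x * W.innerL x (l - k - 2) (W.DownL x f) (W.DownL x g)
      = ∑ y ∈ W.lvl (l - 1), W.m y * W.Down f y * W.Down g y * W.chSum x y := by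
    intro x hx
    simp only [WGP.lvl, Finset.mem_filter, Finset.mem_univ, true_and] at hx
    rw [WGP.innerL, Finset.mul_sum]
    have hsub : W.linkLvl x (l - k - 2) ⊆ W.lvl (l - 1) := by
      intro y hy
      simp only [WGP.lvl, WGP.linkLvl, Finset.mem_filter, Finset.mem_univ, true_and] at hy ⊢
      omega
    rw [← Finset.sum_subset hsub]
    · refine Finset.sum_congr rfl fun y hy => ?_
      simp only [WGP.linkLvl, Finset.mem_filter, Finset.mem_univ, true_and] at hy
      by_cases h : W.chSum x y = 0
      · simp [WGP.mL, h]
      · rw [W.aux_DownL x y hy.1 h, W.aux_DownL x y hy.1 h, WGP.mL]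
        have h2 := (W.m_pos x).ne'
        field_simp
    · intro y hy hy'
      by_cases h : W.chSum x y = 0
      · simp [h]
      · exfalso
        apply hy'
        have := (W.aux_pow_supp _ _ _ h).1
        simp only [WGP.lvl, WGP.linkLvl, Finset.mem_filter, Finset.mem_univ, true_and] at hy ⊢
        exact ⟨this, by omega⟩
  rw [Finset.sum_congr rfl key, Finset.sum_comm, WGP.innerAt]
  refine Finset.sum_congr rfl fun y hy => ?_
  simp only [WGP.lvl, Finset.mem_filter, Finset.mem_univ, true_and] at hy
  rw [← Finset.mul_sum, W.aux_chSum_sum k hk y (by omega), mul_one]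
end
end

section
/- Let P be a finite pure weighted graded poset of rank d with a standard weight scheme. If P is lower regular at every level with constants (N^low_i) and middle regular at every level with constants (N^mid_i), then P satisfies UL.1 and UL.3 with constants c^xyz_i = N^low_{i+1}/N^mid_i and c^sqr_i = 1/N^low_{i+1}. If in addition P is ∨∧-regular at every level with constants (N^∨∧_i), then P also satisfies UL.2 with constants c^dia_i = N^∨∧_i·N^low_{i+1}/(N^low_i·N^mid_i). -/
open Finset

attribute [local instance] Classical.propDecidable

noncomputable section

theorem WGP.p_zero {P : Type} [Fintype P] [PartialOrder P] (W : WGP P) (y x : P)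
    (h : ¬ x ⋖ y) : W.p y x = 0 := by
  have h1 := W.p_nonneg y x
  have h2 := W.p_pos_iff y x
  by_contra hne
  exact h (h2.1 (lt_of_le_of_ne h1 (Ne.symm hne)))

theorem WGP.p_low {P : Type} [Fintype P] [PartialOrder P] (W : WGP P)
    (Nlow : ℤ → ℕ) (hstd : W.Standard)
    (hlow : ∀ i : ℤ, 0 ≤ i → i ≤ W.d → W.LowerRegAt i (Nlow i))
    (y x : P) (h : x ⋖ y) (l : ℤ) (hl : W.rk y = l) : W.p y x = 1 / (Nlow l : ℝ) := by
  have h1 := W.rk_covBy x y h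
  have h2 := W.rk_lb x
  have h3 := W.rk_ub y
  rw [hstd y x h, hlow l (by omega) (by omega) y hl]

theorem WGP.chSum_two {P : Type} [Fintype P] [PartialOrder P] (W : WGP P)
    (Nlow Nmid : ℤ → ℕ) (hstd : W.Standard)
    (hlow : ∀ i : ℤ, 0 ≤ i → i ≤ W.d → W.LowerRegAt i (Nlow i))
    (hmid : ∀ i : ℤ, 0 ≤ i → i + 1 ≤ W.d → W.MiddleRegAt i (Nmid i))
    (x y z : P) (l : ℤ) (hl : W.rk y = l) (hzy : z ⋖ y) (hyx : y ⋖ x) :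
    W.chSum z x = (Nmid l : ℝ) * (1 / (Nlow (l + 1) : ℝ) * (1 / (Nlow l : ℝ))) := by
  have h1 := W.rk_covBy z y hzy
  have h2 := W.rk_covBy y x hyx
  have h3 := W.rk_lb z
  have h4 := W.rk_ub x
  have h5 : (W.rk x - W.rk z).toNat = 2 := by omega
  unfold WGP.chSum
  rw [h5, pow_two, Matrix.mul_apply]
  have hm := hmid l (by omega) (by omega) x z (by omega) (by omega) (hzy.lt.trans hyx.lt)
  rw [← hm, ← nsmul_eq_mul, ← Finset.sum_const]
  symm
  apply Finset.sum_subset_zero_on_sdiff (Finset.subset_univ _)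
  · intro w hw
    simp only [mem_sdiff, mem_univ, mem_filter, true_and, not_and_or] at hw
    simp only [WGP.upMat, Matrix.of_apply]
    rcases hw with hw | hw
    · rw [W.p_zero w z hw, mul_zero]
    · rw [W.p_zero x w hw, zero_mul]
  · intro w hw
    simp only [mem_univ, mem_filter, true_and] at hw
    have := W.rk_covBy z w hw.1
    simp only [WGP.upMat, Matrix.of_apply]
    rw [W.p_low Nlow hstd hlow x w hw.2 (l+1) (by omega),
      W.p_low Nlow hstd hlow w z hw.1 l (by omega)]

/-- standard regular posets satisfy Property UL with the stated
constants. -/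
theorem stmt3 {P : Type} [Fintype P] [PartialOrder P] (W : WGP P)
    (Nlow Nmid : ℤ → ℕ)
    (hstd : W.Standard)
    (hlow : ∀ i : ℤ, 0 ≤ i → i ≤ W.d → W.LowerRegAt i (Nlow i))
    (hmid : ∀ i : ℤ, 0 ≤ i → i + 1 ≤ W.d → W.MiddleRegAt i (Nmid i)) :
    (W.UL1 (fun i => (Nlow (i + 1) : ℝ) / (Nmid i : ℝ)) ∧
      W.UL3 (fun i => 1 / (Nlow (i + 1) : ℝ))) ∧
    ∀ Nwedge : ℤ → ℕ,
      (∀ i : ℤ, 0 ≤ i → i ≤ W.d → W.WedgeRegAt i (Nwedge i)) →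
      W.UL2 (fun i => (Nwedge i : ℝ) * (Nlow (i + 1) : ℝ) /
        ((Nlow i : ℝ) * (Nmid i : ℝ))) := by
  have hne : ∀ y : P, ∀ l : ℤ, W.rk y = l → 0 ≤ l → (Nlow l : ℝ) ≠ 0 := by
    intro y l hl h0 hN
    have hc := hlow l h0 (hl ▸ W.rk_ub y) y hl
    have hs := W.p_sum y (by omega)
    rw [Nat.cast_eq_zero.1 hN, Finset.card_eq_zero] at hc
    rw [hc] at hs
    simp at hs
  refine ⟨⟨?_, ?_⟩, ?_⟩
  · intro l h0 hd y hl x hyx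
    have hc := hlow l h0 hd.le y hl
    have hN := hne y l hl h0
    rw [Finset.sum_congr rfl (g := fun _ => (1 / (Nlow l : ℝ)) ^ 2 /
      ((Nmid l : ℝ) * (1 / (Nlow (l + 1) : ℝ) * (1 / (Nlow l : ℝ)))))]
    · rw [Finset.sum_const, hc, nsmul_eq_mul]
      field_simp
    · intro z hz
      simp only [mem_univ, mem_filter, true_and] at hz
      rw [W.chSum_two Nlow Nmid hstd hlow hmid x y z l hl hz hyx,
        W.p_low Nlow hstd hlow y z hz l hl]
  · intro l h0 hd y hl
    rw [W.m_eq y (by omega), Finset.mul_sum]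
    apply Finset.sum_congr rfl
    intro x hx
    simp only [mem_univ, mem_filter, true_and] at hx
    have := W.rk_covBy y x hx
    rw [W.p_low Nlow hstd hlow x y hx (l+1) (by omega)]
    ring
  · intro Nw hw l h0 hd y₁ y₂ hl₁ hl₂ hy x h₁ h₂
    have hc := hw l h0 hd.le y₁ y₂ hl₁ hl₂ hy ⟨x, h₁, h₂⟩
    have hN := hne y₁ l hl₁ h0
    rw [Finset.sum_congr rfl (g := fun _ => (1 / (Nlow l : ℝ)) * (1 / (Nlow l : ℝ)) /
      ((Nmid l : ℝ) * (1 / (Nlow (l + 1) : ℝ) * (1 / (Nlow l : ℝ)))))]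
    · rw [Finset.sum_const, hc, nsmul_eq_mul]
      field_simp
    · intro z hz
      simp only [mem_univ, mem_filter, true_and] at hz
      rw [W.chSum_two Nlow Nmid hstd hlow hmid x y₁ z l hl₁ hz.1 h₁,
        W.p_low Nlow hstd hlow y₁ z hz.1 l hl₁, W.p_low Nlow hstd hlow y₂ z hz.2 l hl₂]
end
end

section
/- Let P be a finite pure weighted graded poset of rank d possessing Property UL with constants (c^xyz_l, c^dia_l, c^sqr_l), and assume c^dia_l > 0. Then for any 0 ≤ l ≤ d−1 and all f, g ∈ C^l: ⟨U_l f, U_l g⟩ = (1/c^dia_l)·Σ_{z∈P(l−1)} m(z)·⟨U_{z,0}(f_z), U_{z,0}(g_z)⟩_z − c^sqr_l·(c^xyz_l/c^dia_l − 1)·⟨f,g⟩. -/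
open Finset

attribute [local instance] Classical.propDecidable

noncomputable section

/-- Garland-type localization of `⟨U_l f, U_l g⟩` under
Property UL. -/
theorem stmt4 {P : Type} [Fintype P] [PartialOrder P] (W : WGP P)
    (cxyz cdia csqr : ℤ → ℝ)
    (h1 : W.UL1 cxyz) (h2 : W.UL2 cdia) (h3 : W.UL3 csqr)
    (l : ℤ) (hl0 : 0 ≤ l) (hld : l ≤ W.d - 1) (hdia : 0 < cdia l)
    (f g : P → ℝ) :
    W.innerAt (l + 1) (W.Up f) (W.Up g)
      = (1 / cdia l) *
          (∑ z ∈ W.lvl (l - 1), W.m z * W.innerL z 1 (W.UpL z f) (W.UpL z g))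
        - csqr l * (cxyz l / cdia l - 1) * W.innerAt l f g := by
  have hp0 : ∀ y x, ¬ x ⋖ y → W.p y x = 0 := fun y x h =>
    le_antisymm (not_lt.mp (fun h' => h ((W.p_pos_iff y x).1 h'))) (W.p_nonneg y x)
  have hld' : l < W.d := by omega
  have hch1 : ∀ z y, z ⋖ y → W.chSum z y = W.p y z := by
    intro z y h
    have := W.rk_covBy z y h
    have h' : (W.rk y - W.rk z).toNat = 1 := by omega
    simp [WGP.chSum, h', WGP.upMat]
  have hch2 : ∀ z x, W.rk z = l - 1 → W.rk x = l + 1 →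
      W.chSum z x = ∑ y, W.p x y * W.p y z := by
    intro z x hz hx
    have h' : (W.rk x - W.rk z).toNat = 2 := by omega
    simp [WGP.chSum, h', WGP.upMat, pow_two, Matrix.mul_apply]
  have hUpL : ∀ (f : P → ℝ) z x, W.rk z = l - 1 → W.rk x = l + 1 →
      W.UpL z f x = (∑ y, W.p x y * W.p y z * f y) / W.chSum z x := by
    intro f z x hz hx
    simp only [WGP.UpL, WGP.upMatL, Matrix.mulVec, dotProduct, Matrix.of_apply, WGP.pL]
    rw [Finset.sum_div]
    refine Finset.sum_congr rfl fun y _ => ?_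
    by_cases hyx : y ⋖ x
    · have hry := W.rk_covBy y x hyx
      by_cases hzy : z ≤ y
      · have hr : (W.rk y - W.rk z).toNat = 1 := by omega
        have : W.chSum z y = W.p y z := by simp [WGP.chSum, hr, WGP.upMat]
        rw [if_pos ⟨hyx, hzy⟩, this]; ring
      · rw [if_neg (fun h => hzy h.2), hp0 y z (fun h => hzy h.le)]; ring
    · rw [if_neg (fun h => hyx h.1), hp0 x y hyx]; ring
  have hin : ∀ z ∈ W.lvl (l - 1), W.m z * W.innerL z 1 (W.UpL z f) (W.UpL z g)
      = ∑ x ∈ W.lvl (l + 1), ∑ y₁, ∑ y₂, W.m x * (W.p x y₁ * W.p x y₂ * f y₁ * g y₂) *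
          (W.p y₁ z * W.p y₂ z / W.chSum z x) := by
    intro z hz
    have hz' : W.rk z = l - 1 := by simpa [WGP.lvl] using hz
    have hsub : W.linkLvl z 1 ⊆ W.lvl (l + 1) := by
      intro x hx
      simp only [WGP.linkLvl, WGP.lvl, Finset.mem_filter, Finset.mem_univ, true_and] at hx ⊢
      omega
    unfold WGP.innerL
    rw [Finset.sum_subset hsub, Finset.mul_sum]
    · refine Finset.sum_congr rfl fun x hx => ?_
      have hx' : W.rk x = l + 1 := by simpa [WGP.lvl] using hx
      rw [hUpL f z x hz' hx', hUpL g z x hz' hx', WGP.mL]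
      have hm := (W.m_pos z).ne'
      have e : W.m z * (W.m x / W.m z * W.chSum z x *
          ((∑ y, W.p x y * W.p y z * f y) / W.chSum z x) *
          ((∑ y, W.p x y * W.p y z * g y) / W.chSum z x)) =
          W.m x * ((∑ y, W.p x y * W.p y z * f y) * (∑ y, W.p x y * W.p y z * g y))
            / W.chSum z x := by
        by_cases hS : W.chSum z x = 0
        · simp [hS]
        · field_simp
      rw [e, Finset.sum_mul_sum, Finset.mul_sum, Finset.sum_div]
      refine Finset.sum_congr rfl fun y₁ _ => ?_
      rw [Finset.mul_sum, Finset.sum_div]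
      refine Finset.sum_congr rfl fun y₂ _ => ?_
      ring
    · intro x hx hnx
      have hx' : W.rk x = l + 1 := by simpa [WGP.lvl] using hx
      have hzx : ¬ z ≤ x := by
        intro h
        apply hnx
        simp only [WGP.linkLvl, Finset.mem_filter, Finset.mem_univ, true_and]
        exact ⟨h, by omega⟩
      have : W.chSum z x = 0 := by
        rw [hch2 z x hz' hx']
        refine Finset.sum_eq_zero fun y _ => ?_
        by_cases hyx : y ⋖ x
        · rw [hp0 y z (fun h => hzx (h.le.trans hyx.le))]; ring
        · rw [hp0 x y hyx]; ring
      simp [WGP.mL, this]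
  have hK : ∀ x ∈ W.lvl (l + 1), ∀ y₁ y₂, y₁ ⋖ x → y₂ ⋖ x →
      ∑ z ∈ W.lvl (l - 1), W.p y₁ z * W.p y₂ z / W.chSum z x
        = cdia l + if y₁ = y₂ then cxyz l - cdia l else 0 := by
    intro x hx y₁ y₂ hy₁ hy₂
    have hx' : W.rk x = l + 1 := by simpa [WGP.lvl] using hx
    have r₁ := W.rk_covBy _ _ hy₁
    have r₂ := W.rk_covBy _ _ hy₂
    have hs : ∑ z ∈ W.lvl (l - 1), W.p y₁ z * W.p y₂ z / W.chSum z x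
        = ∑ z ∈ univ.filter (fun z => z ⋖ y₁ ∧ z ⋖ y₂), W.p y₁ z * W.p y₂ z / W.chSum z x := by
      symm
      apply Finset.sum_subset
      · intro z hz
        simp only [WGP.lvl, Finset.mem_filter, Finset.mem_univ, true_and] at hz ⊢
        have := W.rk_covBy _ _ hz.1
        omega
      · intro z _ hz
        simp only [Finset.mem_filter, Finset.mem_univ, true_and, not_and_or] at hz
        rcases hz with h | h
        · rw [hp0 _ _ h]; ring
        · rw [hp0 _ _ h]; ring
    rw [hs]
    by_cases h : y₁ = y₂
    · subst h
      rw [if_pos rfl, ← h1 l hl0 hld' y₁ (by omega) x hy₁]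
      simp only [and_self, pow_two]
      ring
    · rw [if_neg h, h2 l hl0 hld' y₁ y₂ (by omega) (by omega) h x hy₁ hy₂]; ring
  have hA : ∑ z ∈ W.lvl (l - 1), W.m z * W.innerL z 1 (W.UpL z f) (W.UpL z g)
      = ∑ x ∈ W.lvl (l + 1), ∑ y₁, ∑ y₂, W.m x * (W.p x y₁ * W.p x y₂ * f y₁ * g y₂) *
          (cdia l + if y₁ = y₂ then cxyz l - cdia l else 0) := by
    rw [Finset.sum_congr rfl hin, Finset.sum_comm]
    refine Finset.sum_congr rfl fun x hx => ?_
    rw [Finset.sum_comm]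
    refine Finset.sum_congr rfl fun y₁ _ => ?_
    rw [Finset.sum_comm]
    refine Finset.sum_congr rfl fun y₂ _ => ?_
    rw [← Finset.mul_sum]
    by_cases hy₁ : y₁ ⋖ x
    · by_cases hy₂ : y₂ ⋖ x
      · rw [hK x hx y₁ y₂ hy₁ hy₂]
      · rw [hp0 x y₂ hy₂]; ring
    · rw [hp0 x y₁ hy₁]; ring
  have hL : W.innerAt (l + 1) (W.Up f) (W.Up g)
      = ∑ x ∈ W.lvl (l + 1), ∑ y₁, ∑ y₂, W.m x * (W.p x y₁ * W.p x y₂ * f y₁ * g y₂) := by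
    unfold WGP.innerAt
    refine Finset.sum_congr rfl fun x _ => ?_
    simp only [WGP.Up, WGP.upMat, Matrix.mulVec, dotProduct, Matrix.of_apply]
    rw [mul_assoc, Finset.sum_mul_sum, Finset.mul_sum]
    refine Finset.sum_congr rfl fun y₁ _ => ?_
    rw [Finset.mul_sum]
    refine Finset.sum_congr rfl fun y₂ _ => ?_
    ring
  have hD : ∑ x ∈ W.lvl (l + 1), ∑ y, W.m x * (W.p x y * W.p x y * f y * g y)
      = csqr l * W.innerAt l f g := by
    unfold WGP.innerAt
    rw [Finset.sum_comm, Finset.mul_sum]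
    symm
    apply Finset.sum_subset_zero_on_sdiff (Finset.subset_univ _)
    · intro y hy
      refine Finset.sum_eq_zero fun x hx => ?_
      simp only [WGP.lvl, Finset.mem_sdiff, Finset.mem_filter, Finset.mem_univ, true_and] at hx hy
      rw [hp0 x y (fun h => hy (by have := W.rk_covBy _ _ h; omega))]; ring
    · intro y hy
      have hy' : W.rk y = l := by simpa [WGP.lvl] using hy
      have e : csqr l * (W.m y * f y * g y) = csqr l * W.m y * (f y * g y) := by ring
      rw [e, ← h3 l hl0 hld' y hy', Finset.sum_mul]
      refine (Finset.sum_subset ?_ ?_).trans (Finset.sum_congr rfl fun x _ => ?_)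
      · intro x hx
        simp only [WGP.lvl, Finset.mem_filter, Finset.mem_univ, true_and] at hx ⊢
        have := W.rk_covBy _ _ hx
        omega
      · intro x _ hx
        simp only [Finset.mem_filter, Finset.mem_univ, true_and] at hx
        rw [hp0 _ _ hx]; ring
      · ring
  have hfin : ∑ z ∈ W.lvl (l - 1), W.m z * W.innerL z 1 (W.UpL z f) (W.UpL z g)
      = cdia l * W.innerAt (l + 1) (W.Up f) (W.Up g)
        + (cxyz l - cdia l) * (csqr l * W.innerAt l f g) := by
    rw [hA, hL, ← hD]
    simp only [mul_add, mul_ite, mul_zero, Finset.sum_add_distrib, Finset.sum_ite_eq,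
      Finset.mem_univ, if_true, Finset.mul_sum]
    congr 1
    · refine Finset.sum_congr rfl fun x _ => Finset.sum_congr rfl fun y₁ _ =>
        Finset.sum_congr rfl fun y₂ _ => ?_
      ring
    · refine Finset.sum_congr rfl fun x _ => Finset.sum_congr rfl fun y₁ _ => ?_
      ring
  rw [hfin]
  have := hdia.ne'
  field_simp
  ring
end
end
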